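/- For 0 ≤ k ≤ n and 0 ≤ r < n, |S̄_r(n,k)| = |N_r(n,k)| if and only if at least one of the following holds: (a) n is odd; (b) k is odd; (c) ν₂(n) < ν₂(k) (including k = 0); (d) ν₂(k) − ν₂(r) ≥ 2; (e) k = n is even and r ∉ {0, n/2}. -/

import Mathlib

open Finset

/-- Number of ones in a cyclic binary word of length `n`. -/
noncomputable def onesCount (n : ℕ) (w : ZMod n → Bool) : ℕ :=
  Nat.card {i : ZMod n // w i = true}

/-- The co-period of a cyclic binary word `w` of length `n`: the size of its
stabilizer under cyclic rotation (equivalently, the `j` such that `w = v^j`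
with `v` primitive). -/
noncomputable def coPeriod (n : ℕ) (w : ZMod n → Bool) : ℕ :=
  Nat.card {t : ZMod n // ∀ i, w (i + t) = w i}

/-- Two cyclic words are related iff they are cyclic rotations of each other. -/
def rotRel (n : ℕ) (u v : ZMod n → Bool) : Prop :=
  ∃ t : ZMod n, ∀ i, u i = v (i + t)

theorem rotRel_equivalence (n : ℕ) : Equivalence (rotRel n) := by
  constructor
  · exact fun u => ⟨0, fun i => by rw [add_zero]⟩
  · rintro u v ⟨t, h⟩
    exact ⟨-t, fun i => by rw [h, neg_add_cancel_right]⟩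
  · rintro u v w ⟨t1, h1⟩ ⟨t2, h2⟩
    exact ⟨t1 + t2, fun i => by rw [h1, h2, ← add_assoc]⟩

def rotSetoid (n : ℕ) : Setoid (ZMod n → Bool) := ⟨rotRel n, rotRel_equivalence n⟩

/-- The number of binary necklaces of length `n` with `k` ones. -/
noncomputable def NCard (n k : ℕ) : ℕ :=
  Nat.card (Quotient (Setoid.comap
    (Subtype.val : {w : ZMod n → Bool // onesCount n w = k} → _) (rotSetoid n)))

/-- The number of binary necklaces of length `n` with `k` ones whose co-period divides `r`. -/
noncomputable def NrCard (n k r : ℕ) : ℕ :=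
  Nat.card (Quotient (Setoid.comap
    (Subtype.val : {w : ZMod n → Bool // onesCount n w = k ∧ coPeriod n w ∣ r} → _)
    (rotSetoid n)))

/-- The number of `k`-element subsets of `{1,…,n}` whose elements sum to `r` mod `n`. -/
def SbarCard (n k r : ℕ) : ℕ :=
  ((Finset.Icc 1 n).powerset.filter
    (fun A => A.card = k ∧ (∑ a ∈ A, a) % n = r)).card

/-- The number of `k`-element subsets of `{1,…,n-1}` whose elements sum to `r` mod `n`. -/
def SCard (n k r : ℕ) : ℕ :=
  ((Finset.Icc 1 (n - 1)).powerset.filter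
    (fun A => A.card = k ∧ (∑ a ∈ A, a) % n = r)).card

/-- The Ramanujan sum `c_d(r) = ∑_{j ∣ gcd(r,d)} j · μ(d/j)`. -/
def ramanujanSum (d : ℕ) (r : ℤ) : ℤ :=
  ∑ j ∈ (Int.gcd r d).divisors, (j : ℤ) * ArithmeticFunction.moebius (d / j)

/-!
The Fourier coefficient at `t` of the distribution of sums of `k`-subsets of `ℤ/n` is a Gaussian
binomial at a root of unity: a character value times the number of words with `k` ones fixed by
rotation by `t`. Compared with Burnside's count of necklaces, this says that `S̄ᵣ(n,k)` and
`Nₛ(n,k)` with `s = r + k(k+1)/2` are equinumerous.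

Co-periods `h` divide `k`. If `k` is odd, `h ∣ k ∣ k(k+1)/2`, so `s` may be replaced by `r`. If
`k = 2l`, then `h ∣ s ↔ h ∣ r + l`. A divisor `h` of `2l` that does not divide `l` is divisible by
the full power `2^a` of `2` in `2l`; hence `h ∣ r + l` implies `h ∣ r` for all `h` when `2^a ∣ r`,
and the converse holds for all `h` when `2^a ∤ r`. The comparison of `Nᵣ₊ₗ` with `Nᵣ` is therefore
one-sided, and equality forces `h ∣ r + l ↔ h ∣ r` for every co-period `h` that occurs.
-/

section RootsOfUnity

open Polynomial

lemma prod_range_mul_of_periodic {M : Type*} [CommMonoid M] {f : ℕ → M} {d : ℕ}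
    (hf : Function.Periodic f d) (q : ℕ) :
    ∏ i ∈ range (d * q), f i = (∏ i ∈ range d, f i) ^ q := by
  induction q with
  | zero => simp
  | succ q ih =>
    have hshift (i : ℕ) : f (d * q + i) = f i := by
      rw [add_comm, mul_comm]
      exact hf.nat_mul q i
    simp only [mul_add_one, prod_range_add, ih, hshift, pow_succ]

lemma coeff_prod_one_add_C_mul_X {R ι : Type*} [CommSemiring R] (s : Finset ι) (f : ι → R)
    (k : ℕ) :
    (∏ i ∈ s, (1 + C (f i) * X)).coeff k = ∑ A ∈ s.powersetCard k, ∏ i ∈ A, f i := by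
  have hterm (A : Finset ι) : ∏ i ∈ A, C (f i) * X = C (∏ i ∈ A, f i) * X ^ #A := by
    rw [prod_mul_distrib, prod_const, ← map_prod]
  simp only [prod_one_add, hterm, finsetSum_coeff, coeff_C_mul_X_pow, ← sum_filter,
    powersetCard_eq_filter, eq_comm]

lemma coeff_one_add_C_mul_X_pow_pow {R : Type*} [CommSemiring R] (a : R) {d : ℕ} (hd : 0 < d)
    (q k : ℕ) :
    ((1 + C a * X ^ d) ^ q).coeff k = if d ∣ k then a ^ (k / d) * q.choose (k / d) else 0 := by
  have hexpand : (1 + C a * X ^ d) ^ q = expand R d (((1 + X) ^ q).comp (C a * X)) := by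
    simp only [pow_comp, add_comp, one_comp, X_comp, map_pow, map_add, map_one, map_mul,
      expand_C, expand_X]
  rw [hexpand, coeff_expand hd, comp_C_mul_X_coeff, coeff_one_add_X_pow, mul_comm]

variable {R : Type*} [CommRing R] [IsDomain R] {ζ : R} {d : ℕ}

lemma prod_range_sub_primitiveRoot_pow_mul (hζ : IsPrimitiveRoot ζ d) (hd : 0 < d) (x y : R) :
    ∏ i ∈ range d, (x - ζ ^ i * y) = x ^ d - y ^ d := by
  classical
  rw [hζ.pow_sub_pow_eq_prod_sub_mul x y hd, nthRootsFinset_def,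
    prod_eq_multiset_prod (nthRoots d (1 : R)).toFinset, Multiset.toFinset_val,
    hζ.nthRoots_one_nodup.dedup, hζ.nthRoots_eq (one_pow d), Multiset.map_map]
  simp only [Function.comp_apply, mul_one]
  rfl

lemma prod_range_primitiveRoot_pow_succ (hζ : IsPrimitiveRoot ζ d) (hd : 0 < d) :
    ∏ i ∈ range d, ζ ^ (i + 1) = (-1) ^ (d + 1) := by
  have h := prod_range_sub_primitiveRoot_pow_mul hζ hd 0 (-ζ)
  simpa [← pow_succ, zero_pow hd.ne', neg_pow ζ, hζ.pow_eq_one, pow_succ] using h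

lemma prod_range_one_add_primitiveRoot_pow_succ_mul_X (hζ : IsPrimitiveRoot ζ d) (hd : 0 < d) :
    ∏ i ∈ range d, (1 + C (ζ ^ (i + 1)) * X) = 1 + C ((-1) ^ (d + 1)) * X ^ d := by
  have hC : IsPrimitiveRoot (C ζ) d := hζ.map_of_injective C_injective
  calc ∏ i ∈ range d, (1 + C (ζ ^ (i + 1)) * X)
      = ∏ i ∈ range d, (1 - C ζ ^ i * (-(C ζ * X))) :=
        prod_congr rfl fun i _ => by rw [map_pow]; ring
    _ = 1 - (-(C ζ * X)) ^ d := by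
        rw [prod_range_sub_primitiveRoot_pow_mul hC hd, one_pow]
    _ = 1 + C ((-1) ^ (d + 1)) * X ^ d := by
        rw [neg_pow, mul_pow, hC.pow_eq_one]
        simp only [map_pow, map_neg, map_one]
        ring

lemma primitiveRoot_pow_triangle (hζ : IsPrimitiveRoot ζ d) (hd : 0 < d) (m : ℕ) :
    ζ ^ (d * m * (d * m + 1) / 2) = ((-1) ^ (d + 1)) ^ m := by
  have htriangle : d * m * (d * m + 1) / 2 = ∑ i ∈ range (d * m), (i + 1) := by
    have h := sum_range_id (d * m + 1)
    rw [sum_range_succ', add_zero, Nat.add_sub_cancel, mul_comm (d * m + 1)] at h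
    exact h.symm
  have hperiodic : Function.Periodic (fun i => ζ ^ (i + 1)) d := fun i => by
    simp only [add_right_comm i d 1, pow_add _ _ d, hζ.pow_eq_one, mul_one]
  rw [htriangle, ← prod_pow_eq_pow_sum, prod_range_mul_of_periodic hperiodic,
    prod_range_primitiveRoot_pow_succ hζ hd]

-- Up to the factor `ζ ^ (k * (k + 1) / 2)`, the left-hand side is a Gaussian binomial at `ζ`.
lemma sum_powersetCard_primitiveRoot_pow_sum (hζ : IsPrimitiveRoot ζ d) (hd : 0 < d) (q k : ℕ) :
    ∑ A ∈ (Icc 1 (d * q)).powersetCard k, ζ ^ (∑ a ∈ A, a) =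
      if d ∣ k then ζ ^ (k * (k + 1) / 2) * q.choose (k / d) else 0 := by
  have hperiodic : Function.Periodic (fun i => 1 + C (ζ ^ (i + 1)) * X) d := fun i => by
    simp only [add_right_comm i d 1, pow_add _ _ d, hζ.pow_eq_one, mul_one]
  have hprod : ∏ a ∈ Icc 1 (d * q), (1 + C (ζ ^ a) * X) =
      (1 + C ((-1) ^ (d + 1)) * X ^ d) ^ q := by
    rw [← prod_range_one_add_primitiveRoot_pow_succ_mul_X hζ hd,
      ← prod_range_mul_of_periodic hperiodic, range_eq_Ico,
      prod_Ico_add' (fun a => 1 + C (ζ ^ a) * X)]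
    rfl
  simp only [← prod_pow_eq_pow_sum]
  rw [← coeff_prod_one_add_C_mul_X, hprod, coeff_one_add_C_mul_X_pow_pow _ hd]
  refine if_ctx_congr Iff.rfl (fun ⟨m, hm⟩ => ?_) fun _ => rfl
  rw [hm, primitiveRoot_pow_triangle hζ hd, Nat.mul_div_cancel_left _ hd]

end RootsOfUnity

section Characters

lemma isPrimitiveRoot_addChar_apply {A R : Type*} [AddMonoid A] [CommMonoid R] {ψ : AddChar A R}
    (hψ : Function.Injective ψ) (a : A) : IsPrimitiveRoot (ψ a) (addOrderOf a) := by
  rw [← orderOf_ofAdd_eq_addOrderOf, ← orderOf_injective ψ.toMonoidHom hψ]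
  exact IsPrimitiveRoot.orderOf (ψ a)

variable {n : ℕ} [NeZero n]

lemma sum_addSubgroup_stdAddChar_mul (K : AddSubgroup (ZMod n)) [Fintype K] (z : ℤ) :
    ∑ t : K, ZMod.stdAddChar ((t : ZMod n) * (z : ZMod n)) =
      if (Nat.card K : ℤ) ∣ z then (Nat.card K : ℂ) else 0 := by
  classical
  obtain ⟨g, hg⟩ := IsAddCyclic.exists_generator (α := K)
  let ψ : AddChar K ℂ :=
    (AddChar.mulShift ZMod.stdAddChar (z : ZMod n)).compAddMonoidHom K.subtype
  have hψ (t : K) : ψ t = ZMod.stdAddChar ((t : ZMod n) * (z : ZMod n)) := by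
    simp [ψ, AddChar.mulShift_apply, mul_comm]
  have hψ_eq_one (t : K) : ψ t = 1 ↔ z • t = 0 := by
    rw [hψ, ← AddChar.map_zero_eq_one (ZMod.stdAddChar (N := n)), ZMod.injective_stdAddChar.eq_iff,
      ← ZeroMemClass.coe_eq_zero, AddSubgroup.coe_zsmul, zsmul_eq_mul, mul_comm]
  have htrivial : ψ = 0 ↔ (Nat.card K : ℤ) ∣ z := by
    rw [← addOrderOf_eq_card_of_forall_mem_zmultiples hg, addOrderOf_dvd_iff_zsmul_eq_zero,
      ← hψ_eq_one]
    refine ⟨fun h => by rw [h, AddChar.zero_apply], fun h => DFunLike.ext _ _ fun t => ?_⟩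
    obtain ⟨m, rfl⟩ := AddSubgroup.mem_zmultiples_iff.1 (hg t)
    rw [AddChar.map_zsmul_eq_zpow, h, one_zpow, AddChar.zero_apply]
  simp only [← hψ, AddChar.sum_eq_ite, htrivial, Nat.card_eq_fintype_card]

lemma card_mul_SbarCard_eq_sum_stdAddChar (k : ℕ) {r : ℕ} (hr : r < n) :
    (n : ℂ) * SbarCard n k r = ∑ t : ZMod n, ZMod.stdAddChar (-(t * (r : ZMod n))) *
      ∑ A ∈ (Icc 1 n).powersetCard k, ZMod.stdAddChar t ^ (∑ a ∈ A, a) := by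
  have hchar (t : ZMod n) (s : ℕ) : ZMod.stdAddChar (-(t * (r : ZMod n))) * ZMod.stdAddChar t ^ s =
      ZMod.stdAddChar (t * ((s : ZMod n) - (r : ZMod n))) := by
    rw [← AddChar.map_nsmul_eq_pow, ← AddChar.map_add_eq_mul, nsmul_eq_mul]
    congr 1
    ring
  have hmod (s : ℕ) : (s : ZMod n) - (r : ZMod n) = 0 ↔ s % n = r := by
    rw [sub_eq_zero, ZMod.natCast_eq_natCast_iff, Nat.ModEq, Nat.mod_eq_of_lt hr]
  simp only [mul_sum, hchar]
  rw [sum_comm]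
  simp only [AddChar.sum_mulShift _ (ZMod.isPrimitive_stdAddChar n), hmod, ZMod.card,
    Nat.cast_ite, Nat.cast_zero, ← sum_filter, sum_const, nsmul_eq_mul, powersetCard_eq_filter,
    filter_filter, SbarCard, mul_comm]

end Characters

section Rotation

lemma card_addGroup_mul_card_orbits (G X : Type*) [AddGroup G] [AddAction G X] [Finite G]
    [Fintype X] :
    Nat.card G * Nat.card (AddAction.orbitRel.Quotient G X) =
      ∑ x : X, Nat.card (AddAction.stabilizer G x) := by
  let e : (Σ x : X, AddAction.stabilizer G x) ≃ Σ g : G, AddAction.fixedBy X g :=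
    { toFun := fun p => ⟨p.2, p.1, p.2.2⟩
      invFun := fun p => ⟨p.2, p.1, p.2.2⟩ }
  rw [← Nat.card_sigma,
    Nat.card_congr (e.trans (AddAction.sigmaFixedByEquivOrbitsProdAddGroup G X)),
    Nat.card_prod, mul_comm]

lemma card_subtype_comp_of_surjective {G A : Type*} [AddGroup G] [AddGroup A] {φ : G →+ A}
    (hφ : Function.Surjective φ) (p : A → Prop) :
    Nat.card {g // p (φ g)} = Nat.card φ.ker * Nat.card {a // p a} := by
  let e := QuotientAddGroup.quotientKerEquivOfSurjective φ hφ
  calc Nat.card {g // p (φ g)}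
      = Nat.card (φ.ker × {q : G ⧸ φ.ker // p (e q)}) :=
        Nat.card_congr (QuotientAddGroup.preimageMkEquivAddSubgroupProdSet φ.ker {q | p (e q)})
    _ = Nat.card φ.ker * Nat.card {a // p a} := by
        let e' : {q // p (e q)} ≃ {a // p a} := e.toEquiv.subtypeEquiv fun _ => Iff.rfl
        rw [Nat.card_prod, Nat.card_congr e']

lemma card_boolFunctions_of_card_true (α : Type*) [Fintype α] [DecidableEq α] (m : ℕ) :
    #{u : α → Bool | Nat.card {a // u a = true} = m} = (Fintype.card α).choose m := by
  rw [← card_univ, ← card_powersetCard]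
  refine card_nbij' (fun u => univ.filter (u · = true)) (fun s a => decide (a ∈ s)) ?_ ?_ ?_ ?_
  · intro u; simp [Fintype.card_subtype]
  · intro u; simp [Fintype.card_subtype]
  · intro u; simp
  · intro u; simp

/-- The rotation action of `ℤ/n` on cyclic words. The stabilizers of this action have the
co-periods as orders, and its orbits are the necklaces. -/
instance rotationAction (n : ℕ) : AddAction (ZMod n) (ZMod n → Bool) where
  vadd t w i := w (i + t)
  zero_vadd w := funext fun i => congrArg w (add_zero i)
  add_vadd s t w := funext fun i => congrArg w (add_assoc i s t).symm

variable {n : ℕ}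

lemma vadd_word_apply (t : ZMod n) (w : ZMod n → Bool) (i : ZMod n) : (t +ᵥ w) i = w (i + t) :=
  rfl

lemma rotSetoid_eq_orbitRel : rotSetoid n = AddAction.orbitRel (ZMod n) (ZMod n → Bool) :=
  Setoid.ext fun _ _ => exists_congr fun _ => funext_iff.symm.trans eq_comm

lemma coPeriod_eq_card_stabilizer (w : ZMod n → Bool) :
    coPeriod n w = Nat.card (AddAction.stabilizer (ZMod n) w) :=
  Nat.card_congr (Equiv.subtypeEquivRight fun _ => funext_iff.symm)

lemma onesCount_rotation (t : ZMod n) (w : ZMod n → Bool) :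
    onesCount n (t +ᵥ w) = onesCount n w :=
  Nat.card_congr ((Equiv.addRight t).subtypeEquiv fun _ => Iff.rfl)

lemma coPeriod_rotation (t : ZMod n) (w : ZMod n → Bool) :
    coPeriod n (t +ᵥ w) = coPeriod n w := by
  simp only [coPeriod_eq_card_stabilizer]
  exact Nat.card_congr
    (AddAction.stabilizerEquivStabilizerOfOrbitRel ⟨t, rfl⟩).toEquiv

lemma exists_comp_of_le_stabilizer {H : AddSubgroup (ZMod n)} {w : ZMod n → Bool}
    (h : H ≤ AddAction.stabilizer (ZMod n) w) : ∃ u : ZMod n ⧸ H → Bool, u ∘ (↑) = w := by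
  refine ⟨Quotient.lift w fun i j hij => ?_, rfl⟩
  have hmem : -i + j ∈ H := QuotientAddGroup.leftRel_apply.1 hij
  rw [← congrFun (h hmem) i, vadd_word_apply, add_neg_cancel_left]

lemma vadd_word_eq_self_iff {t : ZMod n} {w : ZMod n → Bool} :
    t +ᵥ w = w ↔ ∃ u : ZMod n ⧸ AddSubgroup.zmultiples t → Bool, u ∘ (↑) = w := by
  refine ⟨fun h => ?_, ?_⟩
  · obtain ⟨u, rfl⟩ := exists_comp_of_le_stabilizer (AddSubgroup.zmultiples_le_of_mem h)
    exact ⟨u, rfl⟩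
  · rintro ⟨u, rfl⟩
    exact funext fun i =>
      congrArg u (QuotientAddGroup.mk_add_of_mem i (AddSubgroup.mem_zmultiples t))

lemma onesCount_comp_mk (H : AddSubgroup (ZMod n)) (u : ZMod n ⧸ H → Bool) :
    onesCount n (u ∘ (↑)) = Nat.card H * Nat.card {q // u q = true} := by
  have h := card_subtype_comp_of_surjective (QuotientAddGroup.mk'_surjective H) (u · = true)
  rwa [QuotientAddGroup.ker_mk'] at h

lemma coPeriod_dvd_length (w : ZMod n → Bool) : coPeriod n w ∣ n := by
  have h := AddSubgroup.card_addSubgroup_dvd_card (AddAction.stabilizer (ZMod n) w)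
  rwa [Nat.card_zmod, ← coPeriod_eq_card_stabilizer] at h

lemma coPeriod_dvd_onesCount (w : ZMod n → Bool) : coPeriod n w ∣ onesCount n w := by
  obtain ⟨u, hu⟩ := exists_comp_of_le_stabilizer (le_refl (AddAction.stabilizer (ZMod n) w))
  rw [coPeriod_eq_card_stabilizer, ← hu, onesCount_comp_mk, hu]
  exact dvd_mul_right _ _

variable [NeZero n]

lemma coPeriod_pos (w : ZMod n → Bool) : 0 < coPeriod n w :=
  Nat.pos_of_dvd_of_pos (coPeriod_dvd_length w) (NeZero.pos n)

lemma card_fixed_words (t : ZMod n) (k : ℕ) :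
    #{w : ZMod n → Bool | onesCount n w = k ∧ t +ᵥ w = w} =
      if addOrderOf t ∣ k then (n / addOrderOf t).choose (k / addOrderOf t) else 0 := by
  classical
  let H := AddSubgroup.zmultiples t
  have : Fintype (ZMod n ⧸ H) := Fintype.ofFinite _
  have hindex : Fintype.card (ZMod n ⧸ H) = n / addOrderOf t := by
    have h := AddSubgroup.card_eq_card_quotient_mul_card_addSubgroup H
    rw [Nat.card_zmod, Nat.card_zmultiples, Nat.card_eq_fintype_card] at h
    exact (Nat.div_eq_of_eq_mul_left (addOrderOf_pos t) h).symm
  have hdescend : #{w : ZMod n → Bool | onesCount n w = k ∧ t +ᵥ w = w} =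
      #{u : ZMod n ⧸ H → Bool | addOrderOf t * Nat.card {q // u q = true} = k} := by
    rw [← card_image_of_injective _ (Quotient.mk_surjective.injective_comp_right (γ := Bool))]
    congr 1
    ext w
    simp only [vadd_word_eq_self_iff, mem_filter_univ, mem_image]
    constructor
    · rintro ⟨hw, u, rfl⟩
      exact ⟨u, by rwa [← Nat.card_zmultiples, ← onesCount_comp_mk], rfl⟩
    · rintro ⟨u, hu, rfl⟩
      refine ⟨?_, u, rfl⟩
      rwa [← Nat.card_zmultiples, ← onesCount_comp_mk] at hu
  rw [hdescend]
  split_ifs with hd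
  · obtain ⟨m, rfl⟩ := hd
    simp only [Nat.mul_right_inj (addOrderOf_pos t).ne']
    rw [Nat.mul_div_cancel_left _ (addOrderOf_pos t), card_boolFunctions_of_card_true, hindex]
  · exact card_eq_zero.2 (filter_eq_empty_iff.2 fun u _ h => hd ⟨_, h.symm⟩)

lemma card_mul_NrCard (k s : ℕ) :
    n * NrCard n k s =
      ∑ w : ZMod n → Bool with onesCount n w = k,
        if coPeriod n w ∣ s then coPeriod n w else 0 := by
  let W : SubAddAction (ZMod n) (ZMod n → Bool) :=
    { carrier := {w | onesCount n w = k ∧ coPeriod n w ∣ s}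
      vadd_mem' := fun t w hw => by
        rwa [Set.mem_ofPred_eq, onesCount_rotation, coPeriod_rotation] }
  have hNr : NrCard n k s = Nat.card (AddAction.orbitRel.Quotient (ZMod n) W) := by
    rw [NrCard, rotSetoid_eq_orbitRel, AddAction.orbitRel.Quotient, SubAddAction.orbitRel_of_subAdd]
    rfl
  have : Fintype W := Fintype.ofFinite W
  have h := card_addGroup_mul_card_orbits (ZMod n) W
  rw [Nat.card_zmod] at h
  rw [hNr, h, ← sum_filter, filter_filter]
  simp only [SubAddAction.stabilizer_of_subAdd, ← coPeriod_eq_card_stabilizer]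
  exact (sum_subtype _ (fun w => by rw [mem_filter_univ]; rfl) _).symm

end Rotation

section CyclicSieving

variable {n : ℕ} [NeZero n]

lemma sum_powersetCard_stdAddChar_pow_sum (t : ZMod n) (k : ℕ) :
    ∑ A ∈ (Icc 1 n).powersetCard k, ZMod.stdAddChar t ^ (∑ a ∈ A, a) =
      ZMod.stdAddChar t ^ (k * (k + 1) / 2) *
        #{w : ZMod n → Bool | onesCount n w = k ∧ t +ᵥ w = w} := by
  have hdvd : addOrderOf t ∣ n := by
    simpa only [ZMod.card] using addOrderOf_dvd_card (x := t)
  have hsum := sum_powersetCard_primitiveRoot_pow_sum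
    (isPrimitiveRoot_addChar_apply ZMod.injective_stdAddChar t) (addOrderOf_pos t)
    (n / addOrderOf t) k
  rw [Nat.mul_div_cancel' hdvd] at hsum
  rw [hsum, card_fixed_words, Nat.cast_ite, mul_ite, Nat.cast_zero, mul_zero]

lemma dvd_triangle_sub_iff {h k : ℕ} (hk : h ∣ k) (r : ℕ) :
    (h : ℤ) ∣ ((k * (k + 1) / 2 : ℕ) : ℤ) - r ↔ h ∣ r + k * (k + 1) / 2 := by
  have htwice : h ∣ 2 * (k * (k + 1) / 2) := by
    rw [Nat.mul_div_cancel' (Nat.even_mul_succ_self k).two_dvd]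
    exact hk.mul_right _
  rw [← Int.natCast_dvd_natCast, ← dvd_sub_right (Int.natCast_dvd_natCast.2 htwice)]
  push_cast
  ring_nf

lemma sum_stabilizer_stdAddChar (w : ZMod n → Bool) (r : ℕ) :
    (∑ t : ZMod n with t +ᵥ w = w, ZMod.stdAddChar (-(t * (r : ZMod n))) *
      ZMod.stdAddChar t ^ (onesCount n w * (onesCount n w + 1) / 2)) =
      if coPeriod n w ∣ r + onesCount n w * (onesCount n w + 1) / 2
      then (coPeriod n w : ℂ) else 0 := by
  set T := onesCount n w * (onesCount n w + 1) / 2 with hT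
  have hchar (t : ZMod n) : ZMod.stdAddChar (-(t * (r : ZMod n))) * ZMod.stdAddChar t ^ T =
      ZMod.stdAddChar (t * (((T : ℤ) - r : ℤ) : ZMod n)) := by
    rw [← AddChar.map_nsmul_eq_pow, ← AddChar.map_add_eq_mul, nsmul_eq_mul]
    congr 1
    push_cast
    ring
  have hsum := sum_addSubgroup_stdAddChar_mul (AddAction.stabilizer (ZMod n) w) ((T : ℤ) - r)
  simp only [← coPeriod_eq_card_stabilizer,
    dvd_triangle_sub_iff (coPeriod_dvd_onesCount w), hT] at hsum
  rw [← hsum]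
  simp only [hchar]
  exact sum_subtype _ (fun t => by simp) _

theorem SbarCard_eq_NrCard_add_triangle (k : ℕ) {r : ℕ} (hr : r < n) :
    SbarCard n k r = NrCard n k (r + k * (k + 1) / 2) := by
  have hfixed (t : ZMod n) : (#{w : ZMod n → Bool | onesCount n w = k ∧ t +ᵥ w = w} : ℂ) =
      ∑ w : ZMod n → Bool with onesCount n w = k, if t +ᵥ w = w then 1 else 0 := by
    rw [sum_boole, filter_filter]
  have hmul : (n : ℂ) * SbarCard n k r = (n * NrCard n k (r + k * (k + 1) / 2) : ℕ) := by
    rw [card_mul_SbarCard_eq_sum_stdAddChar k hr, card_mul_NrCard]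
    simp only [sum_powersetCard_stdAddChar_pow_sum, hfixed, mul_sum, mul_boole]
    rw [sum_comm, Nat.cast_sum]
    refine sum_congr rfl fun w hw => ?_
    obtain rfl := (mem_filter.1 hw).2
    simp only [mul_ite, mul_zero]
    rw [← sum_filter, sum_stabilizer_stdAddChar, Nat.cast_ite, Nat.cast_zero]
  exact Nat.eq_of_mul_eq_mul_left (NeZero.pos n) (by exact_mod_cast hmul)

end CyclicSieving

section TwoAdic

variable {h l r : ℕ}

lemma exists_odd_mul_eq_two_mul (hl : h ∣ 2 * l) (hhl : ¬h ∣ l) : ∃ m, Odd m ∧ 2 * l = h * m := by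
  obtain ⟨m, hm⟩ := hl
  refine ⟨m, Nat.not_even_iff_odd.1 fun ⟨c, hc⟩ => hhl ⟨c, ?_⟩, hm⟩
  rw [hc, mul_add] at hm
  lia

lemma two_pow_dvd_of_dvd_two_mul (hl : h ∣ 2 * l) (hhl : ¬h ∣ l) {a : ℕ} (ha : 2 ^ a ∣ 2 * l) :
    2 ^ a ∣ h := by
  obtain ⟨m, hm, hlm⟩ := exists_odd_mul_eq_two_mul hl hhl
  rw [hlm] at ha
  exact (hm.coprime_two_left.pow_left a).dvd_of_dvd_mul_right ha

lemma not_two_pow_padicValNat_dvd (hl : l ≠ 0) : ¬2 ^ padicValNat 2 (2 * l) ∣ l := by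
  rw [padicValNat_dvd_iff_le hl, padicValNat.mul two_ne_zero hl, padicValNat.self one_lt_two]
  lia

lemma padicValNat_two_lt_of_odd_of_even {n k : ℕ} (hn : Odd n) (hk : Even k) (hk0 : k ≠ 0) :
    padicValNat 2 n < padicValNat 2 k := by
  rw [padicValNat.eq_zero_of_not_dvd hn.not_two_dvd_nat]
  exact one_le_padicValNat_of_dvd hk0 hk.two_dvd

lemma ne_half_of_padicValNat_add_two_le {n : ℕ} (hn : Even n)
    (hr : padicValNat 2 r + 2 ≤ padicValNat 2 n) : r ≠ n / 2 := by
  rintro rfl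
  rw [padicValNat.div hn.two_dvd] at hr
  lia

lemma dvd_add_iff_dvd_iff (hl : h ∣ 2 * l) : (h ∣ r + l ↔ h ∣ r) ↔ h ∣ l ∨ ¬h ∣ 2 * r := by
  by_cases hhl : h ∣ l
  · simp only [Nat.dvd_add_left hhl, hhl, true_or]
  obtain ⟨m, ⟨c, hc⟩, hm⟩ := exists_odd_mul_eq_two_mul hl hhl
  have hnot_both : ¬(h ∣ r ∧ h ∣ r + l) := fun ⟨hr, hrl⟩ => hhl ((Nat.dvd_add_right hr).1 hrl)
  have hdvd : h ∣ 2 * r ↔ h ∣ r ∨ h ∣ r + l := by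
    refine ⟨fun hr => ?_, ?_⟩
    · by_contra! hneither
      obtain ⟨m', ⟨c', hc'⟩, hm'⟩ := exists_odd_mul_eq_two_mul hr hneither.1
      refine hneither.2 ⟨c + c' + 1, ?_⟩
      rw [hc] at hm
      rw [hc'] at hm'
      linarith
    · rintro (hr | hrl)
      · exact hr.mul_left 2
      · have h2 := hrl.mul_left 2
        rwa [mul_add, Nat.dvd_add_left hl] at h2
  tauto

lemma dvd_add_imp_or_imp_dvd_add (l r : ℕ) :
    (∀ h, h ∣ 2 * l → h ∣ r + l → h ∣ r) ∨ (∀ h, h ∣ 2 * l → h ∣ r → h ∣ r + l) := by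
  rcases eq_or_ne l 0 with rfl | hl
  · exact .inl fun _ _ => id
  by_cases hr : 2 ^ padicValNat 2 (2 * l) ∣ r
  · refine .inl fun h hh hrl => (Nat.dvd_add_left ?_).1 hrl
    by_contra hhl
    exact not_two_pow_padicValNat_dvd hl <| (Nat.dvd_add_right hr).1 <|
      (two_pow_dvd_of_dvd_two_mul hh hhl pow_padicValNat_dvd).trans hrl
  · refine .inr fun h hh hhr => (Nat.dvd_add_right hhr).2 ?_
    by_contra hhl
    exact hr ((two_pow_dvd_of_dvd_two_mul hh hhl pow_padicValNat_dvd).trans hhr)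

lemma dvd_add_triangle_iff_of_odd {k : ℕ} (hk : Odd k) (hh : h ∣ k) :
    h ∣ r + k * (k + 1) / 2 ↔ h ∣ r := by
  rw [Nat.mul_div_assoc k (hk.add_odd odd_one).two_dvd]
  exact Nat.dvd_add_left (hh.mul_right _)

lemma dvd_add_triangle_two_mul_iff (hh : h ∣ 2 * l) :
    h ∣ r + 2 * l * (2 * l + 1) / 2 ↔ h ∣ r + l := by
  have htriangle : r + 2 * l * (2 * l + 1) / 2 = r + l + 2 * l * l := by
    rw [mul_assoc, Nat.mul_div_cancel_left _ two_pos]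
    ring
  rw [htriangle, Nat.dvd_add_left (hh.mul_right l)]

end TwoAdic

section Comparison

variable {n : ℕ} [NeZero n] {k r : ℕ}

lemma NrCard_eq_iff_of_dvd_imp {s s' : ℕ}
    (himp : ∀ w, onesCount n w = k → coPeriod n w ∣ s → coPeriod n w ∣ s') :
    NrCard n k s = NrCard n k s' ↔
      ∀ w, onesCount n w = k → (coPeriod n w ∣ s ↔ coPeriod n w ∣ s') := by
  rw [← Nat.mul_right_inj (NeZero.ne n), card_mul_NrCard, card_mul_NrCard,
    sum_eq_sum_iff_of_le fun w hw => ?_]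
  · simp only [mem_filter_univ]
    refine forall₂_congr fun w _ => ?_
    have := coPeriod_pos w
    grind
  · have := himp w (mem_filter.1 hw).2
    grind

lemma NrCard_congr {s s' : ℕ}
    (h : ∀ w, onesCount n w = k → (coPeriod n w ∣ s ↔ coPeriod n w ∣ s')) :
    NrCard n k s = NrCard n k s' :=
  (NrCard_eq_iff_of_dvd_imp fun w hw => (h w hw).1).2 h

lemma SbarCard_eq_NrCard_of_odd (hk : Odd k) (hr : r < n) : SbarCard n k r = NrCard n k r :=
  (SbarCard_eq_NrCard_add_triangle k hr).trans <| NrCard_congr fun w hw =>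
    dvd_add_triangle_iff_of_odd hk (hw ▸ coPeriod_dvd_onesCount w)

lemma SbarCard_two_mul_eq_NrCard_add (l : ℕ) (hr : r < n) :
    SbarCard n (2 * l) r = NrCard n (2 * l) (r + l) :=
  (SbarCard_eq_NrCard_add_triangle _ hr).trans <| NrCard_congr fun w hw =>
    dvd_add_triangle_two_mul_iff (hw ▸ coPeriod_dvd_onesCount w)

lemma SbarCard_two_mul_eq_NrCard_iff (l : ℕ) (hr : r < n) :
    SbarCard n (2 * l) r = NrCard n (2 * l) r ↔
      ∀ w, onesCount n w = 2 * l → coPeriod n w ∣ l ∨ ¬coPeriod n w ∣ 2 * r := by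
  have hcoPeriod (w : ZMod n → Bool) (hw : onesCount n w = 2 * l) : coPeriod n w ∣ 2 * l :=
    hw ▸ coPeriod_dvd_onesCount w
  have hcompare : NrCard n (2 * l) (r + l) = NrCard n (2 * l) r ↔
      ∀ w, onesCount n w = 2 * l → (coPeriod n w ∣ r + l ↔ coPeriod n w ∣ r) := by
    rcases dvd_add_imp_or_imp_dvd_add l r with himp | himp
    · exact NrCard_eq_iff_of_dvd_imp fun w hw => himp _ (hcoPeriod w hw)
    · simpa only [eq_comm, iff_comm] using
        NrCard_eq_iff_of_dvd_imp fun w hw => himp _ (hcoPeriod w hw)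
  rw [SbarCard_two_mul_eq_NrCard_add l hr, hcompare]
  exact forall₂_congr fun w hw => dvd_add_iff_dvd_iff (hcoPeriod w hw)

end Comparison

section CoPeriods

/-- The word `uᶜ` of length `c * N`: `c` consecutive copies of the cyclic word `u` of length `N`. -/
def wordPow (c : ℕ) {N : ℕ} (u : ZMod N → Bool) : ZMod (c * N) → Bool :=
  u ∘ ZMod.castHom (dvd_mul_left N c) (ZMod N)

lemma card_subtype_castHom (c N : ℕ) [NeZero N] (p : ZMod N → Prop) :
    Nat.card {i : ZMod (c * N) // p (ZMod.castHom (dvd_mul_left N c) (ZMod N) i)} =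
      c * Nat.card {j // p j} := by
  let φ := (ZMod.castHom (dvd_mul_left N c) (ZMod N)).toAddMonoidHom
  have hφ : Function.Surjective φ := ZMod.castHom_surjective (dvd_mul_left N c)
  have hker : Nat.card φ.ker = c := by
    have h := φ.ker.card_mul_index
    rw [AddSubgroup.index_ker, AddMonoidHom.range_eq_top.2 hφ, AddSubgroup.card_top,
      Nat.card_zmod, Nat.card_zmod] at h
    exact Nat.eq_of_mul_eq_mul_right (NeZero.pos N) h
  exact (card_subtype_comp_of_surjective hφ p).trans (by rw [hker])

lemma onesCount_wordPow (c : ℕ) {N : ℕ} [NeZero N] (u : ZMod N → Bool) :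
    onesCount (c * N) (wordPow c u) = c * onesCount N u :=
  card_subtype_castHom c N (u · = true)

lemma coPeriod_wordPow (c : ℕ) {N : ℕ} [NeZero N] (u : ZMod N → Bool) :
    coPeriod (c * N) (wordPow c u) = c * coPeriod N u := by
  rw [coPeriod, coPeriod, ← card_subtype_castHom]
  refine Nat.card_congr (Equiv.subtypeEquivRight fun t => ?_)
  simp only [wordPow, Function.comp_apply, map_add,
    (ZMod.castHom_surjective (dvd_mul_left N c)).forall]

/-- The word `1ᴷ0ᴺ⁻ᴷ` of length `N`, a single block of `K` ones. -/
def blockWord (N K : ℕ) : ZMod N → Bool := fun i => decide (i.val < K)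

variable {N K : ℕ}

lemma onesCount_blockWord [NeZero N] (hK : K ≤ N) : onesCount N (blockWord N K) = K := by
  let e : {i : ZMod N // blockWord N K i = true} ≃ Fin K :=
    { toFun := fun i => ⟨i.1.val, of_decide_eq_true i.2⟩
      invFun := fun j => ⟨(j.1 : ZMod N), by
        simp [blockWord, ZMod.val_natCast_of_lt (j.2.trans_le hK)]⟩
      left_inv := fun i => by simp
      right_inv := fun j => by simp [ZMod.val_natCast_of_lt (j.2.trans_le hK)] }
  exact Nat.card_eq_of_equiv_fin e

lemma coPeriod_blockWord (hK : 0 < K) (hKN : K < N) : coPeriod N (blockWord N K) = 1 := by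
  obtain ⟨M, rfl⟩ := Nat.exists_eq_add_one_of_ne_zero (hK.trans hKN).ne'
  have : Fact (1 < M + 1) := ⟨by lia⟩
  rw [coPeriod_eq_card_stabilizer, AddSubgroup.card_eq_one, AddSubgroup.eq_bot_iff_forall]
  intro t ht
  have hperiod (i : ZMod (M + 1)) : (i + t).val < K ↔ i.val < K :=
    decide_eq_decide.1 (congrFun ht i)
  by_contra ht0
  have ht_pos : 1 ≤ t.val := Nat.one_le_iff_ne_zero.2 ((ZMod.val_ne_zero t).2 ht0)
  have ht_lt : t.val < K := by simpa only [zero_add, ZMod.val_zero, hK, iff_true] using hperiod 0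
  have hneg_one : (-1 + t).val = t.val - 1 := by
    rw [neg_add_eq_sub, ZMod.val_sub (by rwa [ZMod.val_one]), ZMod.val_one]
  have h := hperiod (-1)
  rw [hneg_one, ZMod.val_neg_one] at h
  lia

variable {n k : ℕ}

lemma exists_onesCount_eq_coPeriod_eq {c : ℕ} (hcn : c ∣ n) (hck : c ∣ k) (hk : 0 < k)
    (hkn : k < n) : ∃ w, onesCount n w = k ∧ coPeriod n w = c := by
  obtain ⟨N, rfl⟩ := hcn
  obtain ⟨K, rfl⟩ := hck
  have hK : 0 < K := Nat.pos_of_mul_pos_left hk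
  have hKN : K < N := Nat.lt_of_mul_lt_mul_left hkn
  have : NeZero N := ⟨(hK.trans hKN).ne'⟩
  refine ⟨wordPow c (blockWord N K), ?_, ?_⟩
  · rw [onesCount_wordPow, onesCount_blockWord hKN.le]
  · rw [coPeriod_wordPow, coPeriod_blockWord hK hKN, mul_one]

variable [NeZero n]

lemma onesCount_eq_length_iff {w : ZMod n → Bool} : onesCount n w = n ↔ w = fun _ => true := by
  have hcard : onesCount n w = n ↔ #{i | w i = true} = #(univ : Finset (ZMod n)) := by
    rw [onesCount, Nat.card_eq_fintype_card, Fintype.card_subtype, card_univ, ZMod.card]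
  rw [hcard, card_filter_eq_iff, funext_iff]
  simp only [mem_univ, forall_const]

lemma coPeriod_const (b : Bool) : coPeriod n (fun _ => b) = n := by
  simp [coPeriod]

end CoPeriods

section Cases

variable {n : ℕ} [NeZero n] {k r : ℕ}

lemma SbarCard_zero_eq_NrCard (hr : r < n) : SbarCard n 0 r = NrCard n 0 r :=
  (SbarCard_two_mul_eq_NrCard_iff 0 hr).2 fun _ _ => .inl (dvd_zero _)

lemma SbarCard_self_eq_NrCard_iff (hn : Even n) (hr : r < n) :
    SbarCard n n r = NrCard n n r ↔ r ≠ 0 ∧ r ≠ n / 2 := by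
  obtain ⟨l, rfl⟩ := hn.two_dvd
  have hl : 0 < l := Nat.pos_of_mul_pos_left (NeZero.pos (2 * l))
  have hndvd : ¬2 * l ∣ l := Nat.not_dvd_of_pos_of_lt hl (by lia)
  simp only [SbarCard_two_mul_eq_NrCard_iff l hr, onesCount_eq_length_iff, forall_eq,
    coPeriod_const, hndvd, false_or, Nat.mul_dvd_mul_iff_left two_pos,
    Nat.mul_div_cancel_left l two_pos]
  refine ⟨fun h => ⟨?_, ?_⟩, ?_⟩
  · rintro rfl
    exact h (dvd_zero l)
  · rintro rfl
    exact h dvd_rfl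
  · rintro ⟨hr0, hrl⟩ ⟨q, rfl⟩
    have hq : q < 2 := by nlinarith
    interval_cases q <;> simp at hr0 hrl

lemma SbarCard_eq_NrCard_iff_of_even_of_lt (hk : Even k) (hk0 : 0 < k) (hkn : k < n)
    (hr : r < n) :
    SbarCard n k r = NrCard n k r ↔
      padicValNat 2 n < padicValNat 2 k ∨ r ≠ 0 ∧ padicValNat 2 r + 2 ≤ padicValNat 2 k := by
  obtain ⟨l, rfl⟩ := hk.two_dvd
  have hl : l ≠ 0 := (Nat.pos_of_mul_pos_left hk0).ne'
  set a := padicValNat 2 (2 * l)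
  have ha : 2 ^ a ∣ 2 * l := pow_padicValNat_dvd
  have hcommon : SbarCard n (2 * l) r = NrCard n (2 * l) r ↔ ¬2 ^ a ∣ n ∨ ¬2 ^ a ∣ 2 * r := by
    rw [SbarCard_two_mul_eq_NrCard_iff l hr]
    constructor
    · intro h
      by_cases han : 2 ^ a ∣ n
      · obtain ⟨w, hw, hwa⟩ := exists_onesCount_eq_coPeriod_eq han ha hk0 hkn
        exact .inr ((hwa ▸ h w hw).resolve_left (not_two_pow_padicValNat_dvd hl))
      · exact .inl han
    · intro h w hw
      by_contra! hdvd
      have haw : 2 ^ a ∣ coPeriod n w :=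
        two_pow_dvd_of_dvd_two_mul (hw ▸ coPeriod_dvd_onesCount w) hdvd.1 ha
      exact h.elim (· (haw.trans (coPeriod_dvd_length w))) (· (haw.trans hdvd.2))
  have hr_dvd : ¬2 ^ a ∣ 2 * r ↔ r ≠ 0 ∧ padicValNat 2 r + 2 ≤ a := by
    rcases eq_or_ne r 0 with rfl | hr0
    · simp
    · rw [padicValNat_dvd_iff_le (by lia), padicValNat.mul two_ne_zero hr0,
        padicValNat.self one_lt_two]
      lia
  rw [hcommon, hr_dvd, padicValNat_dvd_iff_le (NeZero.ne n), not_le]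

end Cases

/-- Characterization of when `|S̄ᵣ(n,k)| = |Nᵣ(n,k)|`. -/
theorem Sbar_eq_Nr_iff (n k r : ℕ) (hk : k ≤ n) (hr : r < n) :
    SbarCard n k r = NrCard n k r ↔
      (Odd n ∨ Odd k ∨ (k = 0 ∨ padicValNat 2 n < padicValNat 2 k) ∨
        (r ≠ 0 ∧ padicValNat 2 r + 2 ≤ padicValNat 2 k) ∨
        (k = n ∧ Even n ∧ r ≠ 0 ∧ r ≠ n / 2)) := by
  have : NeZero n := ⟨by lia⟩
  rcases Nat.even_or_odd k with hk_even | hk_odd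
  · have hk_not_odd : ¬Odd k := Nat.not_odd_iff_even.2 hk_even
    rcases Nat.eq_zero_or_pos k with rfl | hk_pos
    · exact iff_of_true (SbarCard_zero_eq_NrCard hr) (by simp)
    rcases hk.eq_or_lt with rfl | hkn
    · rw [SbarCard_self_eq_NrCard_iff hk_even hr]
      have hhalf := ne_half_of_padicValNat_add_two_le (n := k) (r := r)
      have hlt_irrefl := lt_irrefl (padicValNat 2 k)
      have hk_ne_zero := hk_pos.ne'
      tauto
    · rw [SbarCard_eq_NrCard_iff_of_even_of_lt hk_even hk_pos hkn hr]
      have hn_odd := padicValNat_two_lt_of_odd_of_even (n := n) (k := k)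
      have hk_ne_zero := hk_pos.ne'
      have hk_ne_n := hkn.ne
      tauto
  · exact iff_of_true (SbarCard_eq_NrCard_of_odd hk_odd hr) (.inr (.inl hk_odd))
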